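/- In every maximum b-matching f, every vertex i ∈ V^P satisfies x_i(f) = b_i, and f({i,j}) = 0 for every edge {i,j} of G with i ∈ V^P and j ∈ V^O. (Perfectly demanded vertices are saturated and exchange only among themselves in every Pareto-efficient b-matching.) -/

import Mathlib

variable {V : Type*} [Fintype V] [DecidableEq V]

/-- The utility of vertex `i` under the b-matching `f`: the total weight of edges incident to `i`. -/
def bmUtil (G : SimpleGraph V) [DecidableRel G.Adj] (f : Sym2 V → ℕ) (i : V) : ℕ :=
  ∑ e ∈ G.edgeFinset.filter (fun e => i ∈ e), f e

/-- `f` is a feasible b-matching for `(G, b)`. -/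
def BMFeasible (G : SimpleGraph V) [DecidableRel G.Adj] (b : V → ℕ) (f : Sym2 V → ℕ) : Prop :=
  ∀ i, bmUtil G f i ≤ b i

/-- The size of a b-matching: the total weight over all edges. -/
def bmSize (G : SimpleGraph V) [DecidableRel G.Adj] (f : Sym2 V → ℕ) : ℕ :=
  ∑ e ∈ G.edgeFinset, f e

/-- `f` is a maximum b-matching for `(G, b)`. -/
def IsMaxBM (G : SimpleGraph V) [DecidableRel G.Adj] (b : V → ℕ) (f : Sym2 V → ℕ) : Prop :=
  BMFeasible G b f ∧ ∀ g, BMFeasible G b g → bmSize G g ≤ bmSize G f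

/-- Underdemanded vertices: unsaturated in at least one maximum b-matching. -/
def VU (G : SimpleGraph V) [DecidableRel G.Adj] (b : V → ℕ) : Set V :=
  {i | ∃ f, IsMaxBM G b f ∧ bmUtil G f i < b i}

/-- Overdemanded vertices: not underdemanded, with at least one underdemanded neighbor. -/
def VO (G : SimpleGraph V) [DecidableRel G.Adj] (b : V → ℕ) : Set V :=
  {i | i ∉ VU G b ∧ ∃ j ∈ VU G b, G.Adj i j}

/-- Perfectly demanded vertices. -/
def VP (G : SimpleGraph V) [DecidableRel G.Adj] (b : V → ℕ) : Set V :=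
  {i | i ∉ VU G b ∧ i ∉ VO G b}

/-!
If `f`, `g` are maximum b-matchings and `g` leaves `u` unsaturated, follow an alternating path of
the symmetric difference from `u`, along which `f` and `g` dominate in turn; it ends at a vertex
left unsaturated by `f`. Toggling `f` along the path gives a maximum b-matching that leaves `u`
unsaturated. Every second vertex of the path is left unsaturated by some maximum b-matching, hence
lies in `VU`, so `f` changes only on edges that meet `VU`. For `i ∉ VU` and `j ∈ VO` with a neighbor
`u ∈ VU`, this reduces to the case that `f` itself leaves `u` unsaturated; then a unit on `ij`
could be moved to `ju`, leaving `i` unsaturated.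
-/

section TransferUnit

variable {α : Type*} [DecidableEq α] {e e' : α} {f g k : α → ℕ}

/-- `f` with one unit moved from the index `e` to the index `e'`. This is the elementary step along
an alternating path. Adding before subtracting, it has the intended value also for `e = e'`; for
`e ≠ e'` the truncated subtraction requires `0 < f e`. -/
def transferUnit (f : α → ℕ) (e e' : α) : α → ℕ :=
  f + Pi.single e' 1 - Pi.single e 1

theorem transferUnit_add_single (he : 0 < f e) :
    transferUnit f e e' + Pi.single e 1 = f + Pi.single e' 1 :=
  tsub_add_cancel_of_le <|
    le_add_right (update_le_iff.2 ⟨he, fun d _ => Nat.zero_le (f d)⟩)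

theorem transferUnit_apply_of_ne {d : α} (he : d ≠ e) (he' : d ≠ e') :
    transferUnit f e e' d = f d := by
  simp [transferUnit, he, he']

theorem sub_transferUnit_add_single (he : g e < f e) (he' : f e' < g e') :
    f - transferUnit g e' e + Pi.single e 1 = f - g := by
  ext d
  simp only [transferUnit, Pi.add_apply, Pi.sub_apply, Pi.single_apply]
  grind

theorem pos_of_inf_transferUnit_le (hne : e ≠ e') (he : g e < f e)
    (hk : f ⊓ transferUnit g e' e ≤ k) : 0 < k e := by
  refine lt_of_lt_of_le ?_ (hk e)
  simp [transferUnit, hne, Nat.zero_lt_of_lt he]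

theorem inf_le_transferUnit (he : g e < f e) (hk : f ⊓ transferUnit g e' e ≤ k) :
    f ⊓ g ≤ transferUnit k e e' := by
  intro d
  have hkd := hk d
  simp only [transferUnit, Pi.inf_apply, Pi.add_apply, Pi.sub_apply, Pi.single_apply] at hkd ⊢
  grind

end TransferUnit

section BMatching

variable {G : SimpleGraph V} [DecidableRel G.Adj] {b : V → ℕ} {f g : Sym2 V → ℕ} {a c u v : V}

theorem bmUtil_add (f g : Sym2 V → ℕ) (i : V) :
    bmUtil G (f + g) i = bmUtil G f i + bmUtil G g i :=
  Finset.sum_add_distrib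

omit [DecidableEq V] in
theorem bmSize_add (f g : Sym2 V → ℕ) : bmSize G (f + g) = bmSize G f + bmSize G g :=
  Finset.sum_add_distrib

theorem bmUtil_single {e : Sym2 V} (he : e ∈ G.edgeSet) (n : ℕ) (i : V) :
    bmUtil G (Pi.single e n) i = if i ∈ e then n else 0 := by
  simp [bmUtil, he]

theorem bmSize_single {e : Sym2 V} (he : e ∈ G.edgeSet) (n : ℕ) :
    bmSize G (Pi.single e n) = n := by
  simp [bmSize, he]

theorem exists_adj_lt_of_bmUtil_lt (h : bmUtil G g u < bmUtil G f u) :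
    ∃ v, G.Adj u v ∧ g s(u, v) < f s(u, v) := by
  obtain ⟨e, he, hlt⟩ := Finset.exists_lt_of_sum_lt h
  simp only [Finset.mem_filter, SimpleGraph.mem_edgeFinset] at he
  obtain ⟨huv, v, rfl⟩ := he
  exact ⟨v, huv, hlt⟩

theorem exists_adj_lt_of_bmUtil_le (h : bmUtil G f v ≤ bmUtil G g v) (hvu : G.Adj v u)
    (hlt : g s(v, u) < f s(v, u)) : ∃ w, G.Adj v w ∧ f s(v, w) < g s(v, w) := by
  by_contra! hle
  refine h.not_gt (Finset.sum_lt_sum (fun e he => ?_) ⟨s(v, u), by simp [hvu], hlt⟩)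
  simp only [Finset.mem_filter, SimpleGraph.mem_edgeFinset] at he
  obtain ⟨hvw, w, rfl⟩ := he
  exact hle w hvw

theorem bmUtil_transferUnit (hva : G.Adj v a) (hvc : G.Adj v c) (hpos : 0 < f s(v, a)) (z : V) :
    bmUtil G (transferUnit f s(v, a) s(v, c)) z + (if z = a then 1 else 0) =
      bmUtil G f z + (if z = c then 1 else 0) := by
  have h := congrArg (bmUtil G · z) (transferUnit_add_single (e' := s(v, c)) hpos)
  simp only [bmUtil_add, bmUtil_single (G.mem_edgeSet.2 hva), bmUtil_single (G.mem_edgeSet.2 hvc),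
    Sym2.mem_iff] at h
  grind [hva.ne, hvc.ne]

theorem bmSize_transferUnit {e e' : Sym2 V} (he : e ∈ G.edgeSet) (he' : e' ∈ G.edgeSet)
    (hpos : 0 < f e) : bmSize G (transferUnit f e e') = bmSize G f := by
  have h := congrArg (bmSize G) (transferUnit_add_single (e' := e') hpos)
  simpa only [bmSize_add, bmSize_single he, bmSize_single he', Nat.add_right_cancel_iff] using h

theorem BMFeasible.bmUtil_transferUnit_lt (hf : BMFeasible G b f) (hva : G.Adj v a)
    (hvc : G.Adj v c) (hpos : 0 < f s(v, a)) (hac : a ≠ c) :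
    bmUtil G (transferUnit f s(v, a) s(v, c)) a < b a := by
  have h := bmUtil_transferUnit hva hvc hpos a
  rw [if_pos rfl, if_neg hac] at h
  exact (Nat.lt_of_succ_le h.le).trans_le (hf a)

protected theorem IsMaxBM.transferUnit (hf : IsMaxBM G b f) (hva : G.Adj v a) (hvc : G.Adj v c)
    (hpos : 0 < f s(v, a)) (hc : bmUtil G f c < b c) :
    IsMaxBM G b (transferUnit f s(v, a) s(v, c)) := by
  refine ⟨fun z => ?_, fun g hg => ?_⟩
  · have hutil := bmUtil_transferUnit hva hvc hpos z
    have hz := hf.1 z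
    grind
  · rw [bmSize_transferUnit hva hvc hpos]
    exact hf.2 g hg

theorem IsMaxBM.bmUtil_eq_of_notMem_VU (hf : IsMaxBM G b f) (hu : u ∉ VU G b) :
    bmUtil G f u = b u :=
  (hf.1 u).eq_of_not_lt fun hlt => hu ⟨f, hf, hlt⟩

theorem IsMaxBM.bmUtil_eq_of_adj (hf : IsMaxBM G b f) (huv : G.Adj u v)
    (hu : bmUtil G f u < b u) : bmUtil G f v = b v := by
  by_contra hne
  have hv : bmUtil G f v < b v := (hf.1 v).lt_of_ne hne
  have hfeas : BMFeasible G b (f + Pi.single s(u, v) 1) := by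
    intro z
    have hz := hf.1 z
    simp only [bmUtil_add, bmUtil_single (G.mem_edgeSet.2 huv), Sym2.mem_iff]
    grind
  have hsize := hf.2 _ hfeas
  rw [bmSize_add, bmSize_single huv] at hsize
  exact Nat.not_succ_le_self _ hsize

theorem IsMaxBM.exists_alternating_adj_adj (hg : IsMaxBM G b g) (hf : BMFeasible G b f)
    (hlt : bmUtil G g u < bmUtil G f u) :
    ∃ v w, G.Adj v u ∧ G.Adj v w ∧ g s(v, u) < f s(v, u) ∧ f s(v, w) < g s(v, w) := by
  obtain ⟨v, huv, hgf⟩ := exists_adj_lt_of_bmUtil_lt hlt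
  rw [Sym2.eq_swap] at hgf
  have hgv : bmUtil G g v = b v := hg.bmUtil_eq_of_adj huv (hlt.trans_le (hf u))
  obtain ⟨w, hvw, hfg⟩ := exists_adj_lt_of_bmUtil_le (hgv ▸ hf v) huv.symm hgf
  exact ⟨v, w, huv.symm, hvw, hgf, hfg⟩

-- The bound `f ⊓ g ≤ k` keeps the induction going: it makes `k` positive on the edge from which the
-- next unit is removed.
theorem IsMaxBM.exists_bmUtil_lt_and_eq_off_VU (hf : IsMaxBM G b f) (hg : IsMaxBM G b g)
    (hu : bmUtil G g u < b u) :
    ∃ k, IsMaxBM G b k ∧ bmUtil G k u < b u ∧ f ⊓ g ≤ k ∧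
      ∀ e : Sym2 V, (∀ z ∈ e, z ∉ VU G b) → k e = f e := by
  induction hn : bmSize G (f - g) using Nat.strong_induction_on generalizing g u with
  | _ n ih =>
    by_cases hfu : bmUtil G f u < b u
    · exact ⟨f, hf, hfu, inf_le_left, fun _ _ => rfl⟩
    obtain ⟨v, w, hvu, hvw, hgf, hfg⟩ :=
      hg.exists_alternating_adj_adj hf.1 (hu.trans_le (not_lt.1 hfu))
    have hwu : w ≠ u := by
      rintro rfl
      exact hgf.not_gt hfg
    let g' := transferUnit g s(v, w) s(v, u)
    have hg' : IsMaxBM G b g' := hg.transferUnit hvw hvu (Nat.zero_lt_of_lt hfg) hu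
    have hg'w : bmUtil G g' w < b w :=
      hg.1.bmUtil_transferUnit_lt hvw hvu (Nat.zero_lt_of_lt hfg) hwu
    have hdist : bmSize G (f - g') < n := by
      rw [← hn, ← sub_transferUnit_add_single hgf hfg, bmSize_add, bmSize_single hvu]
      exact Nat.lt_succ_self _
    obtain ⟨k, hk, hkw, hinf, hoff⟩ := ih _ hdist hg' hg'w rfl
    have hpos : 0 < k s(v, u) :=
      pos_of_inf_transferUnit_le (mt Sym2.congr_right.1 hwu.symm) hgf hinf
    refine ⟨transferUnit k s(v, u) s(v, w), hk.transferUnit hvu hvw hpos hkw,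
      hk.1.bmUtil_transferUnit_lt hvu hvw hpos hwu.symm, inf_le_transferUnit hgf hinf,
      fun e he => ?_⟩
    have hu_mem : u ∈ VU G b := ⟨g, hg, hu⟩
    have hw_mem : w ∈ VU G b := ⟨g', hg', hg'w⟩
    rw [transferUnit_apply_of_ne, hoff e he]
    · rintro rfl
      exact he u (Sym2.mem_mk_right v u) hu_mem
    · rintro rfl
      exact he w (Sym2.mem_mk_right v w) hw_mem

theorem IsMaxBM.apply_eq_zero_of_notMem_VU_of_mem_VO {i j : V} (hf : IsMaxBM G b f)
    (hi : i ∉ VU G b) (hj : j ∈ VO G b) (hij : G.Adj i j) : f s(i, j) = 0 := by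
  obtain ⟨hjU, u, ⟨g, hg, hgu⟩, hju⟩ := hj
  obtain ⟨k, hk, hku, -, hoff⟩ := hf.exists_bmUtil_lt_and_eq_off_VU hg hgu
  have hkf : k s(j, i) = f s(j, i) := hoff _ (by simp [hi, hjU])
  have hiu : i ≠ u := by
    rintro rfl
    exact hi ⟨g, hg, hgu⟩
  by_contra hne
  have hpos : 0 < k s(j, i) := by
    rw [hkf, Sym2.eq_swap]
    exact Nat.pos_of_ne_zero hne
  exact hi ⟨_, hk.transferUnit hij.symm hju hpos hku,
    hk.1.bmUtil_transferUnit_lt hij.symm hju hpos hiu⟩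

end BMatching

theorem stmt_6_general (G : SimpleGraph V) [DecidableRel G.Adj] (b : V → ℕ)
    (f : Sym2 V → ℕ) (hf : IsMaxBM G b f) :
    (∀ i ∉ VU G b, bmUtil G f i = b i) ∧
    (∀ i j, i ∉ VU G b → j ∈ VO G b → G.Adj i j → f s(i, j) = 0) :=
  ⟨fun _ hi => hf.bmUtil_eq_of_notMem_VU hi,
    fun _ _ hi hj hij => hf.apply_eq_zero_of_notMem_VU_of_mem_VO hi hj hij⟩

/-- in every maximum b-matching, every perfectly demanded vertex is saturated and
sends nothing to overdemanded vertices. -/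
theorem stmt_6 (G : SimpleGraph V) [DecidableRel G.Adj] (b : V → ℕ)
    (f : Sym2 V → ℕ) (hf : IsMaxBM G b f) :
    (∀ i ∈ VP G b, bmUtil G f i = b i) ∧
    (∀ i j, i ∈ VP G b → j ∈ VO G b → G.Adj i j → f s(i, j) = 0) := by
  obtain ⟨hsat, hzero⟩ := stmt_6_general G b f hf
  exact ⟨fun i hi => hsat i hi.1, fun i j hi hj hij => hzero i j hi.1 hj hij⟩
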